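/- If G is a connected chordal graph with a minimal tree representation T, then lpt(G) ≤ (4 · ccg(T) + 5) · ccg(T). -/

import Mathlib

open SimpleGraph

/-- A graph is chordal if every cycle on at least 4 vertices has a chord
(an edge of the graph joining two vertices of the cycle that is not an edge of the cycle). -/
def IsChordal {V : Type} (G : SimpleGraph V) : Prop :=
  ∀ (v : V) (c : G.Walk v v), c.IsCycle → 4 ≤ c.length →
    ∃ a b : V, a ∈ c.support ∧ b ∈ c.support ∧ G.Adj a b ∧ s(a, b) ∉ c.edges

/-- A tree representation of `G` with host tree `T`: each vertex `u` of `G` gets a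
nonempty subtree `S u` of `T`, and distinct vertices are adjacent iff their subtrees meet. -/
structure TreeRep {V W : Type} (G : SimpleGraph V) (T : SimpleGraph W) : Type where
  isTree : T.IsTree
  S : V → Set W
  subtree_connected : ∀ u : V, (T.induce (S u)).Connected
  adj_iff : ∀ u v : V, u ≠ v → (G.Adj u v ↔ (S u ∩ S v).Nonempty)

/-- A tree representation is minimal if no tree representation of `G` has a host tree
with fewer vertices. -/
def TreeRep.IsMinimal {V W : Type} [Fintype W] {G : SimpleGraph V} {T : SimpleGraph W}
    (_R : TreeRep G T) : Prop :=
  ∀ (W' : Type) [Fintype W'] (T' : SimpleGraph W'),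
    Nonempty (TreeRep G T') → Fintype.card W ≤ Fintype.card W'

/-- The bag of a host tree vertex `x`. -/
def TreeRep.bag {V W : Type} {G : SimpleGraph V} {T : SimpleGraph W}
    (R : TreeRep G T) (x : W) : Set V :=
  {u : V | x ∈ R.S u}

/-- In `T` rooted at `r`, the (vertex set of the) subtree rooted at `x`: all vertices `w`
such that the `r`–`w` path contains `x`. -/
def rootedSubtree {W : Type} (T : SimpleGraph W) (r x : W) : Set W :=
  {w : W | ∀ p : T.Walk r w, p.IsPath → x ∈ p.support}

/-- The core of a subgraph `H` of `G`: the union over edges `uv` of `H` of `V(S u ∩ S v)`,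
a set of host-tree vertices. -/
def TreeRep.core {V W : Type} {G : SimpleGraph V} {T : SimpleGraph W}
    (R : TreeRep G T) (H : G.Subgraph) : Set W :=
  {t : W | ∃ u v : V, H.Adj u v ∧ t ∈ R.S u ∧ t ∈ R.S v}

/-- `C` is a connected component of the subgraph of `T` induced on the vertex set `s`. -/
def IsCompOf {W : Type} (T : SimpleGraph W) (s C : Set W) : Prop :=
  C.Nonempty ∧ C ⊆ s ∧ (T.induce C).Connected ∧
    ∀ ⦃a b : W⦄, a ∈ C → b ∈ s → T.Adj a b → b ∈ C

/-- A graph is 2-connected if it has more than 2 vertices and deleting any one vertex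
leaves it connected. -/
def TwoConnected {V : Type} (G : SimpleGraph V) : Prop :=
  2 < Nat.card V ∧ ∀ v : V, (G.induce {v}ᶜ).Connected

/-- `G` is `k`-connected: more than `k` vertices, and deleting fewer than `k` vertices
leaves it connected. -/
def IsKConnectedGraph {V : Type} (G : SimpleGraph V) (k : ℕ) : Prop :=
  k < Nat.card V ∧ ∀ s : Set V, s.Finite → s.ncard < k → (G.induce sᶜ).Connected

/-- The vertex connectivity `κ(G)`: the maximum `k` such that `G` is `k`-connected. -/
noncomputable def vertexConnectivity {V : Type} (G : SimpleGraph V) : ℕ :=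
  sSup {k : ℕ | IsKConnectedGraph G k}

/-- `p` is a path of maximum length in `G`. -/
def IsLongestPath {V : Type} (G : SimpleGraph V) {a b : V} (p : G.Walk a b) : Prop :=
  p.IsPath ∧ ∀ (c d : V) (q : G.Walk c d), q.IsPath → q.length ≤ p.length

/-- `c` is a cycle of maximum length in `G`. -/
def IsLongestCycle {V : Type} (G : SimpleGraph V) {a : V} (c : G.Walk a a) : Prop :=
  c.IsCycle ∧ ∀ (d : V) (q : G.Walk d d), q.IsCycle → q.length ≤ c.length

/-- The longest path transversal number of `G`: the least size of a set of vertices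
meeting every longest path. -/
noncomputable def lpt {V : Type} (G : SimpleGraph V) : ℕ :=
  sInf {k : ℕ | ∃ A : Set V, A.Finite ∧ A.ncard = k ∧
    ∀ (a b : V) (p : G.Walk a b), IsLongestPath G p → ∃ v ∈ A, v ∈ p.support}

/-- The longest cycle transversal number of `G`: the least size of a set of vertices
meeting every longest cycle. -/
noncomputable def lct {V : Type} (G : SimpleGraph V) : ℕ :=
  sInf {k : ℕ | ∃ A : Set V, A.Finite ∧ A.ncard = k ∧
    ∀ (a : V) (c : G.Walk a a), IsLongestCycle G c → ∃ v ∈ A, v ∈ c.support}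

/-- `DQX T q X Q0`: the union, over `y ∈ Q0`, of the component of `X − E(Q)` containing
`y` (all vertices joined to some `y ∈ Q0` by a walk inside `X` avoiding the edges of `q`). -/
def DQX {W : Type} (T : SimpleGraph W) {x z : W} (q : T.Walk x z) (X : Set W)
    (Q0 : Set W) : Set W :=
  {w : W | ∃ y ∈ Q0, ∃ d : (T.deleteEdges {e : Sym2 W | e ∈ q.edges}).Walk y w,
    ∀ a ∈ d.support, a ∈ X}

/-- Cutter can force the Cutter–Chooser game from position `(X, x)` (a subtree `X` of the
host tree, rooted at `x`) to end within `t` rounds: Cutter picks `z ∈ X` and cuts along the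
`x`–`z` path `Q` in `X`; either `X = Q` (game over), or for every component `X'` of
`X − V(Q)` (with its root `x'`, the vertex of `X'` adjacent to `Q`) that Chooser may pick,
Cutter wins within `t - 1` further rounds. -/
def cutterWins {W : Type} (T : SimpleGraph W) : ℕ → Set W → W → Prop
  | 0, _, _ => False
  | t + 1, X, x =>
      ∃ z ∈ X, ∃ p : T.Walk x z, p.IsPath ∧ (∀ w ∈ p.support, w ∈ X) ∧
        (X = {w : W | w ∈ p.support} ∨
          ∀ (X' : Set W) (x' : W), IsCompOf T (X \ {w : W | w ∈ p.support}) X' →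
            x' ∈ X' → (∃ u ∈ p.support, T.Adj u x') → cutterWins T t X' x')

/-- `ccg(X, x)`: the number of rounds of the Cutter–Chooser game on the subtree `X` of the
host tree rooted at `x`, under optimal play. -/
noncomputable def ccgOn {W : Type} (T : SimpleGraph W) (X : Set W) (x : W) : ℕ :=
  sInf {t : ℕ | cutterWins T t X x}

/-- `ccg(T)`: the minimum over roots `r` of `ccg(T, r)`. -/
noncomputable def ccg {W : Type} (T : SimpleGraph W) : ℕ :=
  sInf (Set.range fun r : W => ccgOn T Set.univ r)

/-- A subdivided caterpillar: a tree having a (spine) path containing every vertex of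
degree at least 3. -/
def IsSubdividedCaterpillar {W : Type} (T : SimpleGraph W) : Prop :=
  T.IsTree ∧ ∃ (a b : W) (q : T.Walk a b), q.IsPath ∧
    ∀ v : W, 3 ≤ (T.neighborSet v).ncard → v ∈ q.support

/-- A subdivided star: a tree with at most one vertex of degree at least 3. -/
def IsSubdividedStar {W : Type} (T : SimpleGraph W) : Prop :=
  T.IsTree ∧ ∀ v w : W, 3 ≤ (T.neighborSet v).ncard → 3 ≤ (T.neighborSet w).ncard → v = w

/-- A leaf: a vertex of degree 1. -/
def IsLeaf {W : Type} (T : SimpleGraph W) (v : W) : Prop := (T.neighborSet v).ncard = 1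

/-- `mf T`: the maximum over edges `e` of `T` of the minimum number of leaves of `T`
contained in a component of `T − e`. -/
noncomputable def mf {W : Type} (T : SimpleGraph W) : ℕ :=
  sSup {k : ℕ | ∃ u v : W, T.Adj u v ∧
    k = min {w : W | IsLeaf T w ∧ (T.deleteEdges {s(u, v)}).Reachable u w}.ncard
            {w : W | IsLeaf T w ∧ (T.deleteEdges {s(u, v)}).Reachable v w}.ncard}

/-- In `T` rooted at `r`, `v` is a child of `u`. -/
def IsChildIn {W : Type} (T : SimpleGraph W) (r u v : W) : Prop :=
  T.Adj u v ∧ ∀ p : T.Walk r v, p.IsPath → u ∈ p.support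

/-- In `T` rooted at `r`, `u` is childless. -/
def IsChildlessIn {W : Type} (T : SimpleGraph W) (r u : W) : Prop :=
  ¬ ∃ v : W, IsChildIn T r u v

/-!
Each round of the game costs eight vertices of the transversal, so that `lpt G ≤ 8 * ccg T`.

Suppose that the cores of all longest paths not yet met lie partly in the current subtree `X`, and
let Cutter cut `X` along the path `Q`. The vertices of `Q` induce levels on `X`. As any two longest
paths of a connected graph share a vertex, an extremal choice of levels `[a, b]` yields a vertex
whose subtree contains all of `Q` between `a` and `b`, while every longest path still has a core
point at one of these levels. Two such vertices `v₁`, `v₂` are added to the transversal. They are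
adjacent to all other vertices on the axis (those whose subtree meets `Q` between `a` and `b`), and
the axis separates the rest of the graph from the branches, whose subtrees lie in components of
`X - Q`. A longest path avoiding `v₁` and `v₂` cannot have two consecutive vertices on the axis, so
it enters a branch. Segments of two longest paths that end on the axis can be exchanged through
`v₁` and `v₂`, which adds vertices; hence six further vertices suffice to meet all longest paths
except those that enter one fixed component of `X - Q`. When Chooser picks this component, the
remaining paths satisfy the assumption for the next round, and once Cutter has won no longest path
is left.
-/

section PathLists

variable {V : Type*} {G : SimpleGraph V} {A B M p p' L' M' R' l l' : List V}
  {a a' b b' k k' v v₁ v₂ x : V}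

/-- `l` is the vertex sequence of a path of `G`, or empty. Paths are handled as lists so that
they can be cut and pasted with `++`. -/
def IsPathList (G : SimpleGraph V) (l : List V) : Prop := l.IsChain G.Adj ∧ l.Nodup

/-- `l` is the vertex sequence of a longest path of `G`. -/
structure IsLongestPathList (G : SimpleGraph V) (l : List V) : Prop where
  isPathList : IsPathList G l
  length_le : ∀ ⦃l'⦄, IsPathList G l' → l'.length ≤ l.length

theorem eq_of_isChain_eq {β : Type*} {f : V → β} (h : l.IsChain fun u w => f u = f w) :
    ∀ u ∈ l, ∀ w ∈ l, f u = f w := by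
  have : IsTrans V fun u w => f u = f w := ⟨fun _ _ _ => Eq.trans⟩
  have : Std.Symm fun u w => f u = f w := ⟨fun _ _ => Eq.symm⟩
  intro u hu w hw
  exact List.Pairwise.forall_of_forall (R := fun u w => f u = f w) (fun _ _ => rfl)
    (List.isChain_iff_pairwise.1 h) hu hw

theorem IsPathList.reverse (h : IsPathList G l) : IsPathList G l.reverse :=
  ⟨List.isChain_reverse.2 (h.1.imp fun _ _ hadj => hadj.symm), List.nodup_reverse.2 h.2⟩

theorem IsLongestPathList.reverse (h : IsLongestPathList G l) : IsLongestPathList G l.reverse :=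
  ⟨h.isPathList.reverse, fun l' hl' => by simpa using h.length_le hl'⟩

theorem IsPathList.infix (h : IsPathList G l) (hl' : l' <:+: l) : IsPathList G l' :=
  ⟨h.1.infix hl', h.2.sublist hl'.sublist⟩

theorem IsPathList.left (h : IsPathList G (A ++ B)) : IsPathList G A :=
  h.infix (List.prefix_append A B).isInfix

theorem IsPathList.right (h : IsPathList G (A ++ B)) : IsPathList G B :=
  h.infix (List.suffix_append A B).isInfix

theorem IsPathList.left_concat (h : IsPathList G (A ++ a :: B)) : IsPathList G (A ++ [a]) :=
  h.infix (List.prefix_append_right_inj A |>.2 (by simp)).isInfix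

theorem IsPathList.adj (h : IsPathList G (A ++ a :: b :: B)) : G.Adj a b :=
  (List.isChain_append_cons_cons.1 h.1).2.1

theorem IsPathList.join (hA : IsPathList G (A ++ [x])) (hB : IsPathList G (x :: B))
    (hAB : A.Disjoint (x :: B)) : IsPathList G (A ++ x :: B) :=
  ⟨List.isChain_split.2 ⟨hA.1, hB.1⟩, List.nodup_append'.2 ⟨hA.left.2, hB.2, hAB⟩⟩

theorem IsPathList.glue (hA : IsPathList G (A ++ [a])) (hB : IsPathList G (b :: B))
    (hav : G.Adj a v) (hvb : G.Adj v b) (hvA : v ∉ A ++ [a]) (hvB : v ∉ b :: B)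
    (hAB : (A ++ [a]).Disjoint (b :: B)) : IsPathList G (A ++ a :: v :: b :: B) := by
  refine ⟨List.isChain_append_cons_cons.2 ⟨hA.1, hav, hB.1.cons_cons hvb⟩, ?_⟩
  have hsplit : A ++ a :: v :: b :: B = (A ++ [a]) ++ v :: b :: B := by simp
  rw [hsplit]
  exact List.nodup_append'.2
    ⟨hA.2, List.nodup_cons.2 ⟨hvB, hB.2⟩, List.disjoint_cons_right.2 ⟨hvA, hAB⟩⟩

theorem IsLongestPathList.length_le_of_prefix_exchange (hl : IsLongestPathList G (p' ++ k' :: R'))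
    (hp : IsPathList G (p ++ [k])) (hkv : G.Adj k v) (hvk' : G.Adj v k') (hvp : v ∉ p ++ [k])
    (hvR' : v ∉ k' :: R') (hd : (p ++ [k]).Disjoint (k' :: R')) :
    p.length + 2 ≤ p'.length := by
  have hle := hl.length_le (hp.glue hl.isPathList.right hkv hvk' hvp hvR' hd)
  simp only [List.length_append, List.length_cons] at hle
  lia

theorem IsLongestPathList.length_le_of_segment_exchange
    (hl : IsLongestPathList G (L' ++ a' :: (M' ++ b' :: R')))
    (hM : IsPathList G (a :: (M ++ [b]))) (ha₁ : G.Adj a' v₁) (h₁a : G.Adj v₁ a)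
    (hb₂ : G.Adj b v₂) (h₂b : G.Adj v₂ b') (hne : v₁ ≠ v₂)
    (hv₁l : v₁ ∉ L' ++ a' :: (M' ++ b' :: R')) (hv₂l : v₂ ∉ L' ++ a' :: (M' ++ b' :: R'))
    (hv₁M : v₁ ∉ a :: (M ++ [b])) (hv₂M : v₂ ∉ a :: (M ++ [b]))
    (hd : (a :: (M ++ [b])).Disjoint (L' ++ a' :: b' :: R')) :
    M.length + 4 ≤ M'.length := by
  have hnodup := hl.isPathList.2
  have hleft : IsPathList G (L' ++ a' :: v₁ :: a :: (M ++ [b])) := by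
    refine hl.isPathList.left_concat.glue hM ha₁ h₁a ?_ hv₁M ?_ <;> grind [List.Disjoint]
  have hboth : IsPathList G ((L' ++ a' :: v₁ :: a :: M) ++ b :: v₂ :: b' :: R') := by
    refine IsPathList.glue (by simpa using hleft)
      (hl.isPathList.infix ⟨L' ++ a' :: M', [], by simp⟩) hb₂ h₂b ?_ ?_ ?_ <;>
      grind [List.Disjoint]
  have hle := hl.length_le hboth
  simp only [List.length_append, List.length_cons] at hle
  lia

theorem IsLongestPathList.length_eq (hl : IsLongestPathList G l) (hl' : IsLongestPathList G l') :
    l.length = l'.length :=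
  (hl'.length_le hl.isPathList).antisymm (hl.length_le hl'.isPathList)

theorem isPathList_support {u w : V} {p : G.Walk u w} (hp : p.IsPath) : IsPathList G p.support :=
  ⟨p.isChain_adj_support, hp.support_nodup⟩

theorem IsLongestPathList.ne_nil [Nonempty V] (hl : IsLongestPathList G l) : l ≠ [] := by
  obtain ⟨v⟩ := ‹Nonempty V›
  have hle := hl.length_le (l' := [v]) ⟨by simp, by simp⟩
  grind

theorem IsLongestPathList.two_le_length [Nontrivial V] (hconn : G.Connected)
    (hl : IsLongestPathList G l) : 2 ≤ l.length := by
  obtain ⟨v, _⟩ := exists_pair_ne V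
  obtain ⟨w, hvw⟩ := hconn.preconnected.exists_adj_of_nontrivial v
  exact hl.length_le (l' := [v, w]) ⟨by simpa using hvw, by simpa using hvw.ne⟩

theorem IsLongestPathList.exists_half (hl : IsLongestPathList G l) (hv : v ∈ l) :
    ∃ L, IsPathList G (L ++ [v]) ∧ l.length ≤ 2 * L.length + 1 ∧ L ⊆ l := by
  obtain ⟨A, B, rfl⟩ := List.append_of_mem hv
  rcases le_total A.length B.length with hle | hle
  · refine ⟨B.reverse, by simpa using hl.isPathList.right.reverse, ?_, by simp⟩
    simp only [List.length_append, List.length_cons, List.length_reverse]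
    lia
  · refine ⟨A, hl.isPathList.left_concat, ?_, by simp⟩
    simp only [List.length_append, List.length_cons]
    lia

theorem exists_isPath_between (hconn : G.Connected) {s t : Set V} (hs : s.Nonempty)
    (ht : t.Nonempty) :
    ∃ u ∈ s, ∃ w ∈ t, ∃ p : G.Walk u w, p.IsPath ∧ (∀ x ∈ p.support, x ∈ s → x = u) ∧
      ∀ x ∈ p.support, x ∈ t → x = w := by
  classical
  obtain ⟨⟨u, w⟩, ⟨hu, hw⟩, hmin⟩ :=
    exists_minimalFor_of_wellFoundedLT (· ∈ s ×ˢ t) (fun e => G.dist e.1 e.2) (hs.prod ht)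
  have hdist : ∀ u' ∈ s, ∀ w' ∈ t, G.dist u w ≤ G.dist u' w' := fun u' hu' w' hw' =>
    (le_total _ _).elim (hmin (j := (u', w')) ⟨hu', hw'⟩) id
  obtain ⟨p, hp, hlength⟩ := hconn.exists_path_of_dist u w
  have hsplit (x : V) (hx : x ∈ p.support) :
      (p.takeUntil x hx).length + (p.dropUntil x hx).length = G.dist u w := by
    rw [← hlength, ← Walk.length_append, p.take_spec hx]
  refine ⟨u, hu, w, hw, p, hp, fun x hx hxs => ?_, fun x hx hxt => ?_⟩
  · have hle := (hdist x hxs w hw).trans (dist_le (p.dropUntil x hx))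
    exact (Walk.eq_of_length_eq_zero (p := p.takeUntil x hx) (by grind)).symm
  · have hle := (hdist u hu x hxt).trans (dist_le (p.takeUntil x hx))
    exact Walk.eq_of_length_eq_zero (p := p.dropUntil x hx) (by grind)

-- Two disjoint longest paths together with a shortest path joining them contain a longer path:
-- the longer half of each, linked by the joining path.
theorem IsLongestPathList.exists_mem_inter (hl : IsLongestPathList G l) (hconn : G.Connected)
    (hl' : IsLongestPathList G l') : ∃ u ∈ l, u ∈ l' := by
  by_contra! hdisj
  have := hconn.nonempty
  obtain ⟨u, hu, w, hw, p, hp, hpl, hpl'⟩ := exists_isPath_between hconn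
    (s := {x | x ∈ l}) (t := {x | x ∈ l'}) (List.exists_mem_of_ne_nil l hl.ne_nil)
    (List.exists_mem_of_ne_nil l' hl'.ne_nil)
  obtain ⟨L, hL, hLlen, hLl⟩ := hl.exists_half hu
  obtain ⟨L', hL', hLlen', hLl'⟩ := hl'.exists_half hw
  obtain ⟨M, hM⟩ : ∃ M, p.support = u :: (M ++ [w]) := by
    refine ⟨p.support.tail.dropLast, ?_⟩
    cases p with
    | nil => exact absurd hw (hdisj u hu)
    | cons h p => simp
  have hleft : IsPathList G (L ++ u :: (M ++ [w])) := by
    refine hL.join (hM ▸ isPathList_support hp) ?_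
    have := hL.2
    grind [List.Disjoint]
  have hboth : IsPathList G ((L ++ u :: M) ++ w :: L'.reverse) := by
    refine IsPathList.join (by simpa using hleft) (by simpa using hL'.reverse) ?_
    have := hleft.2
    grind [List.Disjoint]
  have hle := hl.length_le hboth
  have heq := hl.length_eq hl'
  simp only [List.length_append, List.length_cons, List.length_reverse] at hle
  lia

end PathLists

section Separations

variable {V β : Type*} {G : SimpleGraph V} {A : Finset V} {K D : Set V} {h : V → β}
  {l s p p' q q' L L' M M' R R' : List V} {a a' b b' k k' u v v₁ v₂ : V}

/-- The longest paths of `G` that the set `A` fails to meet. -/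
def avoiding (G : SimpleGraph V) (A : Finset V) : Set (List V) :=
  {l | IsLongestPathList G l ∧ ∀ v ∈ A, v ∉ l}

theorem avoiding_subset_avoiding {A' : Finset V} (h : A ⊆ A') : avoiding G A' ⊆ avoiding G A :=
  fun _ hl => ⟨hl.1, fun v hv => hl.2 v (h hv)⟩

theorem reverse_mem_avoiding (hl : l ∈ avoiding G A) : l.reverse ∈ avoiding G A :=
  ⟨hl.1.reverse, by simpa using hl.2⟩

/-- `K` separates `D` from the rest of `G`, and `h` is constant on the components of `G[D]`. -/
structure IsLabelledSeparation (G : SimpleGraph V) (K D : Set V) (h : V → β) : Prop where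
  notMem : ∀ ⦃u⦄, u ∈ D → u ∉ K
  mem_of_adj : ∀ ⦃u w⦄, u ∈ D → w ∉ D → G.Adj u w → w ∈ K
  label_eq : ∀ ⦃u w⦄, u ∈ D → w ∈ D → G.Adj u w → h u = h w

/-- A vertex adjacent to every other vertex of `K`; two segments of paths that end in `K` can be
reconnected through it. -/
def IsHub (G : SimpleGraph V) (K : Set V) (v : V) : Prop :=
  ∀ ⦃k⦄, k ∈ K → k ≠ v → G.Adj k v

theorem IsHub.adj_of_mem_avoiding (hv : IsHub G K v) (hvA : v ∈ A) (hl : l ∈ avoiding G A)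
    (hal : a ∈ l) (ha : a ∈ K) : G.Adj a v :=
  hv ha fun hav => hl.2 v hvA (hav ▸ hal)

theorem IsLongestPathList.notMem_or_notMem_of_isHub (hl : IsLongestPathList G l)
    (hv : IsHub G K v) (hvl : v ∉ l) {w : V} (huw : [u, w] <:+: l) : u ∉ K ∨ w ∉ K := by
  obtain ⟨L, M, rfl⟩ := huw
  by_contra! hK
  have hnodup := hl.isPathList.2
  have hlonger : IsPathList G (L ++ u :: v :: w :: M) := by
    refine (hl.isPathList.infix ⟨[], w :: M, by simp⟩).glue
      (hl.isPathList.infix ⟨L ++ [u], [], by simp⟩) (hv hK.1 ?_) (hv hK.2 ?_).symm ?_ ?_ ?_ <;>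
      grind [List.Disjoint]
  have hle := hl.length_le hlonger
  simp only [List.length_append, List.length_cons, List.length_nil] at hle
  lia

theorem IsHub.length_le_of_prefix_exchange (hv : IsHub G K v) (hvA : v ∈ A)
    (hl : p ++ k :: R ∈ avoiding G A) (hl' : p' ++ k' :: R' ∈ avoiding G A) (hk : k ∈ K)
    (hk' : k' ∈ K) (hd : (p ++ [k]).Disjoint (k' :: R')) : p.length + 2 ≤ p'.length :=
  hl'.1.length_le_of_prefix_exchange hl.1.isPathList.left_concat
    (hv.adj_of_mem_avoiding hvA hl (by simp) hk)
    (hv.adj_of_mem_avoiding hvA hl' (by simp) hk').symm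
    (by grind [hl.2 v hvA]) (by grind [hl'.2 v hvA]) hd

theorem IsHub.length_le_of_segment_exchange (hv₁ : IsHub G K v₁) (hv₂ : IsHub G K v₂)
    (hv₁A : v₁ ∈ A) (hv₂A : v₂ ∈ A) (hne : v₁ ≠ v₂)
    (hl : L ++ a :: (M ++ b :: R) ∈ avoiding G A)
    (hl' : L' ++ a' :: (M' ++ b' :: R') ∈ avoiding G A) (ha : a ∈ K) (hb : b ∈ K) (ha' : a' ∈ K)
    (hb' : b' ∈ K) (hd : (a :: (M ++ [b])).Disjoint (L' ++ a' :: b' :: R')) :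
    M.length + 4 ≤ M'.length :=
  hl'.1.length_le_of_segment_exchange (hl.1.isPathList.infix ⟨L, R, by simp⟩)
    (hv₁.adj_of_mem_avoiding hv₁A hl' (by simp) ha')
    (hv₁.adj_of_mem_avoiding hv₁A hl (by simp) ha).symm
    (hv₂.adj_of_mem_avoiding hv₂A hl (by simp) hb)
    (hv₂.adj_of_mem_avoiding hv₂A hl' (by simp) hb').symm hne (hl'.2 v₁ hv₁A) (hl'.2 v₂ hv₂A)
    (by grind [hl.2 v₁ hv₁A]) (by grind [hl.2 v₂ hv₂A]) hd

theorem IsLabelledSeparation.label_eq_of_isPathList (H : IsLabelledSeparation G K D h)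
    (hs : IsPathList G s) (hsD : ∀ x ∈ s, x ∈ D) : ∀ u ∈ s, ∀ w ∈ s, h u = h w :=
  eq_of_isChain_eq
    (hs.1.imp_of_mem_imp fun u w hu hw hadj => H.label_eq (hsD u hu) (hsD w hw) hadj)

theorem IsLabelledSeparation.mem_of_isPathList_cons (H : IsLabelledSeparation G K D h)
    (hs : IsPathList G (a :: s)) (hne : s ≠ []) (hsD : ∀ x ∈ s, x ∈ D) (ha : a ∉ D) : a ∈ K := by
  obtain ⟨x, s, rfl⟩ := List.exists_cons_of_ne_nil hne
  exact H.mem_of_adj (hsD x (by simp)) ha (IsPathList.adj (A := []) hs).symm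

theorem IsLabelledSeparation.mem_of_isPathList_concat (H : IsLabelledSeparation G K D h)
    (hs : IsPathList G (s ++ [b])) (hne : s ≠ []) (hsD : ∀ x ∈ s, x ∈ D) (hb : b ∉ D) : b ∈ K :=
  H.mem_of_isPathList_cons (s := s.reverse) (by simpa using hs.reverse) (by simpa using hne)
    (by simpa using hsD) hb

/-- A path that starts in `D`, leaves it through `K` and never returns. -/
def IsOneEnded (K D : Set V) (l : List V) : Prop :=
  ∃ p k R, l = p ++ k :: R ∧ k ∈ K ∧ (∀ x ∈ p, x ∈ D) ∧ ∀ x ∈ R, x ∉ D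

/-- A path that meets `D` in an initial and a final segment, with two distinct vertices of `K`
next to them. -/
def IsTwoEnded (K D : Set V) (l : List V) : Prop :=
  ∃ p k M k' q, l = p ++ k :: (M ++ k' :: q) ∧ k ∈ K ∧ k' ∈ K ∧
    (∀ x ∈ p, x ∈ D) ∧ (∀ x ∈ M, x ∉ D) ∧ ∀ x ∈ q, x ∈ D

/-- A path that lies in `D` except for a single vertex of `K`, where it changes label. -/
def IsPinched (K D : Set V) (h : V → β) (l : List V) : Prop :=
  ∃ p k q, l = p ++ k :: q ∧ k ∈ K ∧ (∀ x ∈ p, x ∈ D) ∧ (∀ x ∈ q, x ∈ D) ∧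
    ∀ x ∈ p, ∀ y ∈ q, h x ≠ h y

/-- A path all of whose vertices, with at most one exception, lie in `D` and have the same
label. -/
def IsConcentrated (D : Set V) (h : V → β) (l : List V) : Prop :=
  ∃ k, ∃ u₀ ∈ D, ∀ x ∈ l, x = k ∨ x ∈ D ∧ h x = h u₀

/-- A path that makes an excursion into `D` between two vertices of `K`. -/
def HasInternalRun (K D : Set V) (l : List V) : Prop :=
  ∃ L a s b R, l = L ++ a :: (s ++ b :: R) ∧ a ∈ K ∧ b ∈ K ∧ s ≠ [] ∧ ∀ x ∈ s, x ∈ D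

theorem exists_first_split {P : V → Prop} (hl : ∃ x ∈ l, P x) :
    ∃ A x B, l = A ++ x :: B ∧ P x ∧ ∀ y ∈ A, ¬P y := by
  classical
  obtain ⟨x, hx⟩ := Option.isSome_iff_exists.1
    ((List.find?_isSome (p := fun x => decide (P x))).2 (by simpa using hl))
  obtain ⟨hPx, A, B, rfl, hA⟩ := List.find?_eq_some_iff_append.1 hx
  exact ⟨A, x, B, rfl, by simpa using hPx, by simpa using hA⟩

theorem exists_last_split {P : V → Prop} (hl : ∃ x ∈ l, P x) :
    ∃ A x B, l = A ++ x :: B ∧ P x ∧ ∀ y ∈ B, ¬P y := by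
  obtain ⟨A, x, B, heq, hx, hA⟩ := exists_first_split (l := l.reverse) (by simpa using hl)
  exact ⟨B.reverse, x, A.reverse, List.reverse_injective (by simpa using heq), hx,
    by simpa using hA⟩

theorem IsLabelledSeparation.hasInternalRun (H : IsLabelledSeparation G K D h) {X Y : List V}
    (hl : IsPathList G (X ++ u :: Y)) (hu : u ∈ D) (hX : ∃ x ∈ X, x ∉ D) (hY : ∃ y ∈ Y, y ∉ D) :
    HasInternalRun K D (X ++ u :: Y) := by
  obtain ⟨L, a, s, rfl, ha, hs⟩ := exists_last_split hX
  obtain ⟨t, b, R, rfl, hb, ht⟩ := exists_first_split hY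
  have hrun : ∀ x ∈ s ++ u :: t, x ∈ D := by grind
  refine ⟨L, a, s ++ u :: t, b, R, by simp, ?_, ?_, by simp, hrun⟩
  · exact H.mem_of_isPathList_cons (hl.infix ⟨L, b :: R, by simp⟩) (by simp) hrun ha
  · exact H.mem_of_isPathList_concat (hl.infix ⟨L ++ [a], R, by simp⟩) (by simp) hrun hb

theorem IsLabelledSeparation.isConcentrated_of_forall_mem (H : IsLabelledSeparation G K D h)
    (hl : IsPathList G l) (hne : l ≠ []) (hlD : ∀ x ∈ l, x ∈ D) : IsConcentrated D h l := by
  obtain ⟨u, hu⟩ := List.exists_mem_of_ne_nil l hne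
  exact ⟨u, u, hlD u hu, fun x hx => .inr ⟨hlD x hx, H.label_eq_of_isPathList hl hlD x hx u hu⟩⟩

theorem IsLabelledSeparation.isConcentrated_or_isPinched (H : IsLabelledSeparation G K D h)
    (hl : IsPathList G (p ++ k :: q)) (hk : k ∈ K) (hp : ∀ x ∈ p, x ∈ D) (hq : ∀ x ∈ q, x ∈ D) :
    IsConcentrated D h (p ++ k :: q) ∨ IsPinched K D h (p ++ k :: q) := by
  by_cases hlabel : ∀ x ∈ p, ∀ y ∈ q, h x ≠ h y
  · exact .inr ⟨p, k, q, rfl, hk, hp, hq, hlabel⟩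
  push Not at hlabel
  obtain ⟨x, hx, y, hy, hxy⟩ := hlabel
  have hpconst := H.label_eq_of_isPathList hl.left hp
  have hqconst := H.label_eq_of_isPathList (hl.infix ⟨p ++ [k], [], by simp⟩) hq
  exact .inl ⟨k, x, hp x hx, by grind⟩

theorem IsLabelledSeparation.isOneEnded_or_isTwoEnded (H : IsLabelledSeparation G K D h)
    (hl : IsPathList G (p ++ k :: (M ++ k' :: q))) (hmeet : ∃ u ∈ p ++ k :: (M ++ k' :: q), u ∈ D)
    (hk : k ∉ D) (hk' : k' ∉ D) (hp : ∀ x ∈ p, x ∈ D) (hM : ∀ x ∈ M, x ∉ D)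
    (hq : ∀ x ∈ q, x ∈ D) :
    IsOneEnded K D (p ++ k :: (M ++ k' :: q)) ∨
      IsOneEnded K D (p ++ k :: (M ++ k' :: q)).reverse ∨
        IsTwoEnded K D (p ++ k :: (M ++ k' :: q)) := by
  have hkK (hne : p ≠ []) : k ∈ K := H.mem_of_isPathList_concat hl.left_concat hne hp hk
  have hk'K (hne : q ≠ []) : k' ∈ K :=
    H.mem_of_isPathList_cons (hl.infix ⟨p ++ k :: M, [], by simp⟩) hne hq hk'
  by_cases hpne : p = []
  · have hqne : q ≠ [] := by grind
    exact .inr <| .inl ⟨q.reverse, k', M.reverse ++ [k], by simp [hpne], hk'K hqne,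
      by simpa using hq, by grind⟩
  · by_cases hqne : q = []
    · exact .inl ⟨p, k, M ++ [k'], by simp [hqne], hkK hpne, hp, by grind⟩
    · exact .inr <| .inr ⟨p, k, M, k', q, rfl, hkK hpne, hk'K hqne, hp, hM, hq⟩

theorem IsLabelledSeparation.isPathList_shape (H : IsLabelledSeparation G K D h)
    (hl : IsPathList G l) (hmeet : ∃ u ∈ l, u ∈ D) :
    IsConcentrated D h l ∨ HasInternalRun K D l ∨ IsPinched K D h l ∨ IsOneEnded K D l ∨
      IsOneEnded K D l.reverse ∨ IsTwoEnded K D l := by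
  by_cases hlD : ∀ x ∈ l, x ∈ D
  · exact .inl (H.isConcentrated_of_forall_mem hl (by grind) hlD)
  by_cases hrun : HasInternalRun K D l
  · exact .inr (.inl hrun)
  obtain ⟨p, k, R, rfl, hk, hp⟩ := exists_first_split (P := (· ∉ D)) (by simpa using hlD)
  simp only [not_not] at hp
  obtain ⟨L, k', q, heq, hk', hq⟩ := exists_last_split (l := k :: R) (P := (· ∉ D)) ⟨k, by simp, hk⟩
  simp only [not_not] at hq
  rcases List.cons_eq_append_iff.1 heq with ⟨rfl, heq⟩ | ⟨M, rfl, rfl⟩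
  · obtain ⟨rfl, rfl⟩ := List.cons_eq_cons.1 heq
    have hne : p ≠ [] ∨ R ≠ [] := by grind
    have hkK : k ∈ K := hne.elim
      (fun hne => H.mem_of_isPathList_concat hl.left_concat hne hp hk)
      (fun hne => H.mem_of_isPathList_cons hl.right hne hq hk)
    rcases H.isConcentrated_or_isPinched hl hkK hp hq with hconc | hpinch
    · exact .inl hconc
    · exact .inr <| .inr <| .inl hpinch
  · have hM : ∀ x ∈ M, x ∉ D := by
      intro x hxM hxD
      obtain ⟨M₁, M₂, rfl⟩ := List.append_of_mem hxM
      have hsplit : p ++ k :: (M₁ ++ x :: M₂ ++ k' :: q) =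
          (p ++ k :: M₁) ++ x :: (M₂ ++ k' :: q) := by simp
      rw [hsplit] at hrun hl
      exact hrun (H.hasInternalRun hl hxD ⟨k, by simp, hk⟩ ⟨k', by simp, hk'⟩)
    exact .inr <| .inr <| .inr <| H.isOneEnded_or_isTwoEnded hl hmeet hk hk' hp hM hq

/-- The vertex set `B` meets every path of the family `F`. -/
def IsTransversal (B : Finset V) (F : Set (List V)) : Prop :=
  ∀ l ∈ F, ∃ b ∈ B, b ∈ l

theorem exists_isTransversal_of_descent {F : Set (List V)} {c : ℕ} (B : List V → Finset V)
    (m : List V → ℕ) (hc : ∀ l ∈ F, (B l).card ≤ c)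
    (hdesc : ∀ l ∈ F, ∀ l' ∈ F, (∀ b ∈ B l, b ∉ l') → m l' < m l) :
    ∃ B₀ : Finset V, B₀.card ≤ c ∧ IsTransversal B₀ F := by
  rcases F.eq_empty_or_nonempty with rfl | hne
  · exact ⟨∅, by simp, by simp [IsTransversal]⟩
  obtain ⟨l, hl, hmin⟩ := exists_minimalFor_of_wellFoundedLT (· ∈ F) m hne
  refine ⟨B l, hc l hl, fun l' hl' => ?_⟩
  by_contra! hmiss
  exact (hdesc l hl l' hl' hmiss).not_ge (hmin hl' (hdesc l hl l' hl' hmiss).le)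

theorem IsLabelledSeparation.exists_isTransversal_isOneEnded (H : IsLabelledSeparation G K D h)
    (hv : IsHub G K v) (hvA : v ∈ A) :
    ∃ B : Finset V, B.card ≤ 1 ∧ IsTransversal B {l ∈ avoiding G A | IsOneEnded K D l} := by
  have hshape : ∀ l ∈ {l ∈ avoiding G A | IsOneEnded K D l}, IsOneEnded K D l := fun _ hl => hl.2
  have : Nonempty V := ⟨v⟩
  choose! p k R heq hk hp hR using hshape
  refine exists_isTransversal_of_descent (fun l => {k l}) (fun l => (R l).length) (by simp) ?_
  intro l hl l' hl' hmiss
  have hkl' : k l ∉ p l' ++ k l' :: R l' := heq l' hl' ▸ hmiss (k l) (by simp)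
  have hd : (p l ++ [k l]).Disjoint (k l' :: R l') := by
    grind [List.Disjoint, H.notMem, hp l hl, hR l' hl', hk l' hl']
  have hle := hv.length_le_of_prefix_exchange hvA (heq l hl ▸ hl.1) (heq l' hl' ▸ hl'.1)
    (hk l hl) (hk l' hl') hd
  have hlen := hl.1.1.length_eq hl'.1.1
  rw [heq l hl, heq l' hl'] at hlen
  simp only [List.length_append, List.length_cons] at hlen
  lia

theorem IsLabelledSeparation.exists_isTransversal_isTwoEnded (H : IsLabelledSeparation G K D h)
    (hv₁ : IsHub G K v₁) (hv₂ : IsHub G K v₂) (hv₁A : v₁ ∈ A) (hv₂A : v₂ ∈ A) (hne : v₁ ≠ v₂) :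
    ∃ B : Finset V, B.card ≤ 2 ∧ IsTransversal B {l ∈ avoiding G A | IsTwoEnded K D l} := by
  classical
  have hshape : ∀ l ∈ {l ∈ avoiding G A | IsTwoEnded K D l}, IsTwoEnded K D l := fun _ hl => hl.2
  have : Nonempty V := ⟨v₁⟩
  choose! p k M k' q heq hk hk' hp hM hq using hshape
  refine exists_isTransversal_of_descent (fun l => {k l, k' l}) (fun l => (M l).length)
    (fun _ _ => Finset.card_le_two) ?_
  intro l hl l' hl' hmiss
  have hkl' : k l ∉ p l' ++ k l' :: (M l' ++ k' l' :: q l') :=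
    heq l' hl' ▸ hmiss (k l) (by simp)
  have hk'l' : k' l ∉ p l' ++ k l' :: (M l' ++ k' l' :: q l') :=
    heq l' hl' ▸ hmiss (k' l) (by simp)
  have hd : (k l' :: (M l' ++ [k' l'])).Disjoint (p l ++ k l :: k' l :: q l) := by
    grind [List.Disjoint, H.notMem, hp l hl, hq l hl, hM l' hl', hk l' hl', hk' l' hl']
  have hle := hv₁.length_le_of_segment_exchange hv₂ hv₁A hv₂A hne (heq l' hl' ▸ hl'.1)
    (heq l hl ▸ hl.1) (hk l' hl') (hk' l' hl') (hk l hl) (hk' l hl) hd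
  lia

theorem IsLabelledSeparation.exists_isTransversal_hasInternalRun
    (H : IsLabelledSeparation G K D h) (hv₁ : IsHub G K v₁) (hv₂ : IsHub G K v₂) (hv₁A : v₁ ∈ A)
    (hv₂A : v₂ ∈ A) (hne : v₁ ≠ v₂) (hu : u ∈ D) :
    ∃ B : Finset V, B.card ≤ 2 ∧ ∃ u₀ ∈ D, IsTransversal B
      {l ∈ avoiding G A | HasInternalRun K D l ∧ ∀ u ∈ l, u ∈ D → h u ≠ h u₀} := by
  classical
  rcases {l ∈ avoiding G A | HasInternalRun K D l}.eq_empty_or_nonempty with hempty | hnonempty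
  · refine ⟨∅, by simp, u, hu, fun l hl => ?_⟩
    exact absurd (show l ∈ {l ∈ avoiding G A | HasInternalRun K D l} from ⟨hl.1, hl.2.1⟩)
      (by simp [hempty])
  have hshape : ∀ l ∈ {l ∈ avoiding G A | HasInternalRun K D l}, HasInternalRun K D l :=
    fun _ hl => hl.2
  have : Nonempty V := ⟨v₁⟩
  choose! L a s b R heq ha hb hs hsD using hshape
  obtain ⟨l, hl, hmin⟩ := exists_minimalFor_of_wellFoundedLT
    (· ∈ {l ∈ avoiding G A | HasInternalRun K D l}) (fun l => (L l).length + (R l).length)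
    hnonempty
  obtain ⟨u₀, hu₀⟩ := List.exists_mem_of_ne_nil (s l) (hs l hl)
  refine ⟨{a l, b l}, Finset.card_le_two, u₀, hsD l hl u₀ hu₀, ?_⟩
  rintro l' ⟨hl'A, hl'run, hlabel⟩
  have hl' : l' ∈ {l ∈ avoiding G A | HasInternalRun K D l} := ⟨hl'A, hl'run⟩
  by_contra! hmiss
  have hsl' : ∀ x ∈ s l, x ∉ l' := fun x hx hxl' =>
    hlabel x hxl' (hsD l hl x hx) <| H.label_eq_of_isPathList
      (hl.1.1.isPathList.infix ⟨L l ++ [a l], b l :: R l, by simp [← heq l hl]⟩) (hsD l hl) x hx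
      u₀ hu₀
  have hal' : a l ∉ l' := hmiss (a l) (by simp)
  have hbl' : b l ∉ l' := hmiss (b l) (by simp)
  rw [heq l' hl'] at hsl' hal' hbl'
  have hd : (a l :: (s l ++ [b l])).Disjoint (L l' ++ a l' :: b l' :: R l') := by
    grind [List.Disjoint]
  have hle := hv₁.length_le_of_segment_exchange hv₂ hv₁A hv₂A hne (heq l hl ▸ hl.1)
    (heq l' hl' ▸ hl'.1) (ha l hl) (hb l hl) (ha l' hl') (hb l' hl') hd
  have hlen := hl.1.1.length_eq hl'.1.1
  have hminl' := hmin hl'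
  rw [heq l hl, heq l' hl'] at hlen
  simp only [List.length_append, List.length_cons] at hlen hminl'
  lia

-- Were the apices distinct, gluing the two longer halves would give too long a path unless they
-- meet; but then they carry the same label, so each can instead replace the other.
theorem IsLabelledSeparation.apex_eq_of_isPinched (H : IsLabelledSeparation G K D h)
    (hv : IsHub G K v) (hvA : v ∈ A) (hl : p ++ k :: q ∈ avoiding G A)
    (hl' : p' ++ k' :: q' ∈ avoiding G A) (hk : k ∈ K) (hk' : k' ∈ K) (hp : ∀ x ∈ p, x ∈ D)
    (hq : ∀ x ∈ q, x ∈ D) (hp' : ∀ x ∈ p', x ∈ D) (hq' : ∀ x ∈ q', x ∈ D)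
    (hlabel : ∀ x ∈ p, ∀ y ∈ q, h x ≠ h y) (hlabel' : ∀ x ∈ p', ∀ y ∈ q', h x ≠ h y)
    (hle : q.length ≤ p.length) (hle' : q'.length ≤ p'.length) : k = k' := by
  by_contra hne
  have hkD : k ∉ D := fun hkD => H.notMem hkD hk
  have hk'D : k' ∉ D := fun hk'D => H.notMem hk'D hk'
  by_cases hpp' : p.Disjoint p'
  · have hrev : q.reverse ++ k :: p.reverse ∈ avoiding G A := by
      simpa using reverse_mem_avoiding hl
    have hrev' : q'.reverse ++ k' :: p'.reverse ∈ avoiding G A := by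
      simpa using reverse_mem_avoiding hl'
    have hpq' := hv.length_le_of_prefix_exchange hvA hl hrev' hk hk' (by grind [List.Disjoint])
    have hp'q := hv.length_le_of_prefix_exchange hvA hl' hrev hk' hk (by grind [List.Disjoint])
    simp only [List.length_reverse] at hpq' hp'q
    lia
  · obtain ⟨x, hxp, hxp'⟩ : ∃ x ∈ p, x ∈ p' := by simpa [List.Disjoint] using hpp'
    have hpconst := H.label_eq_of_isPathList hl.1.isPathList.left hp x hxp
    have hp'const := H.label_eq_of_isPathList hl'.1.isPathList.left hp' x hxp'
    have hpp'len := hv.length_le_of_prefix_exchange hvA hl hl' hk hk' (by grind [List.Disjoint])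
    have hp'plen := hv.length_le_of_prefix_exchange hvA hl' hl hk' hk (by grind [List.Disjoint])
    lia

theorem exists_longer_left_of_isPinched (hl : l ∈ avoiding G A) (hpinch : IsPinched K D h l) :
    ∃ p k q, p ++ k :: q ∈ avoiding G A ∧ k ∈ l ∧ k ∈ K ∧ (∀ x ∈ p, x ∈ D) ∧ (∀ x ∈ q, x ∈ D) ∧
      (∀ x ∈ p, ∀ y ∈ q, h x ≠ h y) ∧ q.length ≤ p.length := by
  obtain ⟨p, k, q, rfl, hk, hp, hq, hlabel⟩ := hpinch
  rcases le_total q.length p.length with hle | hle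
  · exact ⟨p, k, q, hl, by simp, hk, hp, hq, hlabel, hle⟩
  · refine ⟨q.reverse, k, p.reverse, by simpa using reverse_mem_avoiding hl, by simp, hk, ?_⟩
    simpa [hle] using ⟨hq, hp, fun x hx y hy => (hlabel y hy x hx).symm⟩

theorem IsLabelledSeparation.exists_isTransversal_isPinched (H : IsLabelledSeparation G K D h)
    (hv : IsHub G K v) (hvA : v ∈ A) :
    ∃ B : Finset V, B.card ≤ 1 ∧ IsTransversal B {l ∈ avoiding G A | IsPinched K D h l} := by
  have hsplit : ∀ l ∈ {l ∈ avoiding G A | IsPinched K D h l}, _ :=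
    fun _ hl => exists_longer_left_of_isPinched hl.1 hl.2
  have : Nonempty V := ⟨v⟩
  choose! p k q hmem hkl hk hp hq hlabel hle using hsplit
  refine exists_isTransversal_of_descent (fun l => {k l}) (fun _ => 0) (by simp) ?_
  intro l hl l' hl' hmiss
  have hkk' : k l = k l' := H.apex_eq_of_isPinched hv hvA (hmem l hl) (hmem l' hl') (hk l hl)
    (hk l' hl') (hp l hl) (hq l hl) (hp l' hl') (hq l' hl') (hlabel l hl) (hlabel l' hl')
    (hle l hl) (hle l' hl')
  exact absurd (hkk' ▸ hkl l' hl') (hmiss (k l) (by simp))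

theorem exists_isTransversal_of_isConcentrated (hconn : G.Connected) (hl : l ∈ avoiding G A)
    (hconc : IsConcentrated D h l) :
    ∃ B : Finset V, B.card ≤ 1 ∧ ∃ u₀ ∈ D,
      IsTransversal B {l ∈ avoiding G A | ∀ u ∈ l, u ∈ D → h u ≠ h u₀} := by
  obtain ⟨k, u₀, hu₀, hk⟩ := hconc
  refine ⟨{k}, by simp, u₀, hu₀, fun l' hl' => ?_⟩
  obtain ⟨x, hxl, hxl'⟩ := hl.1.exists_mem_inter hconn hl'.1.1
  have hxk : x = k := (hk x hxl).resolve_right fun hx => hl'.2 x hxl' hx.1 hx.2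
  exact ⟨k, by simp, hxk ▸ hxl'⟩

theorem IsLabelledSeparation.exists_isTransversal (H : IsLabelledSeparation G K D h)
    (hconn : G.Connected) (hv₁ : IsHub G K v₁) (hv₂ : IsHub G K v₂) (hv₁A : v₁ ∈ A)
    (hv₂A : v₂ ∈ A) (hne : v₁ ≠ v₂) (hnonempty : (avoiding G A).Nonempty)
    (hmeet : ∀ l ∈ avoiding G A, ∃ u ∈ l, u ∈ D) :
    ∃ B : Finset V, B.card ≤ 6 ∧ ∃ u₀ ∈ D,
      IsTransversal B {l ∈ avoiding G A | ∀ u ∈ l, u ∈ D → h u ≠ h u₀} := by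
  classical
  by_cases hconc : ∃ l ∈ avoiding G A, IsConcentrated D h l
  · obtain ⟨l, hl, hlconc⟩ := hconc
    obtain ⟨B, hB, hBtrans⟩ := exists_isTransversal_of_isConcentrated hconn hl hlconc
    exact ⟨B, by lia, hBtrans⟩
  obtain ⟨l, hl⟩ := hnonempty
  obtain ⟨u, -, hu⟩ := hmeet l hl
  obtain ⟨B₁, hB₁, hone⟩ := H.exists_isTransversal_isOneEnded hv₁ hv₁A
  obtain ⟨B₂, hB₂, htwo⟩ := H.exists_isTransversal_isTwoEnded hv₁ hv₂ hv₁A hv₂A hne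
  obtain ⟨B₃, hB₃, hpinch⟩ := H.exists_isTransversal_isPinched hv₁ hv₁A
  obtain ⟨B₄, hB₄, u₀, hu₀, hrun⟩ :=
    H.exists_isTransversal_hasInternalRun hv₁ hv₂ hv₁A hv₂A hne hu
  refine ⟨B₁ ∪ B₂ ∪ (B₃ ∪ B₄), ?_, u₀, hu₀, ?_⟩
  · calc (B₁ ∪ B₂ ∪ (B₃ ∪ B₄)).card
        ≤ (B₁.card + B₂.card) + (B₃.card + B₄.card) := (Finset.card_union_le _ _).trans
          (add_le_add (Finset.card_union_le _ _) (Finset.card_union_le _ _))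
      _ ≤ 6 := by lia
  rintro l ⟨hl, hlabel⟩
  have hcases := H.isPathList_shape hl.1.isPathList (hmeet l hl)
  rcases hcases.resolve_left fun hlconc => hconc ⟨l, hl, hlconc⟩ with hl' | hl' | hl' | hl' | hl'
  · grind [hrun l ⟨hl, hl', hlabel⟩]
  · grind [hpinch l ⟨hl, hl'⟩]
  · grind [hone l ⟨hl, hl'⟩]
  · grind [hone l.reverse ⟨reverse_mem_avoiding hl, hl'⟩]
  · grind [htwo l ⟨hl, hl'⟩]

end Separations

section Trees

variable {W : Type*} {T : SimpleGraph W} {X Q S C D : Set W} {n i : ℕ} {q : ℕ → W} {d : W → ℕ}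
  {a b t t' u v w w' x z : W}

theorem exists_walk_subset (hS : (T.induce S).Connected) (ha : a ∈ S) (hb : b ∈ S) :
    ∃ p : T.Walk a b, ∀ x ∈ p.support, x ∈ S := by
  obtain ⟨p⟩ := hS.preconnected ⟨a, ha⟩ ⟨b, hb⟩
  refine ⟨p.map (Embedding.induce S).toHom, fun x hx => ?_⟩
  obtain ⟨y, -, rfl⟩ := List.mem_map.1 (Walk.support_map _ p ▸ hx)
  exact y.2

theorem eq_and_eq_of_adj_of_disjoint (hT : T.IsAcyclic) (hC : (T.induce C).Connected)
    (hD : (T.induce D).Connected) (hCD : Disjoint C D) (hw : w ∈ C) (hx : x ∈ C) (hw' : w' ∈ D)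
    (hz : z ∈ D) (hadj : T.Adj w w') (hadj' : T.Adj x z) : w = x ∧ w' = z := by
  obtain ⟨p, hp⟩ := exists_walk_subset hC hw hx
  obtain ⟨r, hr⟩ := exists_walk_subset hD hz hw'
  have hbridge : s(w, w') ∈ (p.append (Walk.cons hadj' r)).edges :=
    isBridge_iff_forall_walk_mem_edges.1 (isAcyclic_iff_forall_adj_isBridge.1 hT hadj) _
  rw [Walk.edges_append, Walk.edges_cons, List.mem_append, List.mem_cons] at hbridge
  rcases hbridge with hmem | heq | hmem
  · exact absurd hw' (hCD.notMem_of_mem_left (hp _ (p.snd_mem_support_of_mem_edges hmem)))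
  · rcases Sym2.eq_iff.1 heq with heq | heq
    · exact heq
    · exact absurd hz (heq.1 ▸ hCD.notMem_of_mem_left hw)
  · exact absurd (hr _ (r.fst_mem_support_of_mem_edges hmem)) (hCD.notMem_of_mem_left hw)

theorem exists_reachable_deleteEdges (hT : T.Connected) (p : T.Walk x z) (w : W) :
    ∃ u ∈ p.support, (T.deleteEdges {e | e ∈ p.edges}).Reachable w u := by
  obtain ⟨r⟩ := hT.preconnected w x
  induction r with
  | nil => exact ⟨_, p.start_mem_support, Reachable.refl _⟩
  | @cons a b _ hab _ ih =>
    by_cases hmem : s(a, b) ∈ p.edges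
    · exact ⟨a, p.fst_mem_support_of_mem_edges hmem, Reachable.refl _⟩
    · obtain ⟨u, hu, hbu⟩ := ih p
      exact ⟨u, hu, (Adj.reachable (deleteEdges_adj.2 ⟨hab, hmem⟩)).trans hbu⟩

theorem eq_of_reachable_deleteEdges (hT : T.IsAcyclic) (p : T.Walk x z) (hu : u ∈ p.support)
    (hv : v ∈ p.support) (huv : (T.deleteEdges {e | e ∈ p.edges}).Reachable u v) : u = v := by
  classical
  obtain ⟨r, hr⟩ := huv.exists_isPath
  let s := ((p.takeUntil u hu).reverse.append (p.takeUntil v hv)).bypass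
  have hs : s.edges ⊆ p.edges := fun e he => by
    have hmem := Walk.edges_bypass_subset_edges _ he
    rw [Walk.edges_append, Walk.edges_reverse, List.mem_append, List.mem_reverse] at hmem
    exact hmem.elim (p.edges_takeUntil_subset_edges hu ·) (p.edges_takeUntil_subset_edges hv ·)
  have heq : r.mapLe (deleteEdges_le _) = s :=
    congrArg Subtype.val ((hT.subsingleton_path u v).elim ⟨_, hr.mapLe _⟩ ⟨s, Walk.bypass_isPath _⟩)
  cases r with
  | nil => rfl
  | cons hadj r =>
    refine absurd (hs ?_) (deleteEdges_adj.1 hadj).2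
    rw [← heq]
    simp

-- `c w` is the index of the vertex of `p` at which the component of `w` in `T - E(p)` hangs.
theorem exists_projection_index (hT : T.IsTree) {p : T.Walk x z} (hp : p.IsPath) :
    ∃ c : W → ℕ, (∀ w, c w ≤ p.length) ∧ (∀ w ∈ p.support, p.getVert (c w) = w) ∧
      ∀ w w', T.Adj w w' → c w < c w' →
        c w' = c w + 1 ∧ p.getVert (c w) = w ∧ p.getVert (c w') = w' := by
  choose π hπ hreach using exists_reachable_deleteEdges hT.connected p
  choose c hc hle using fun w => Walk.mem_support_iff_exists_getVert.1 (hπ w)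
  have hpath (w) (hw : w ∈ p.support) : p.getVert (c w) = w :=
    (hc w).trans (eq_of_reachable_deleteEdges hT.isAcyclic p hw (hπ w) (hreach w)).symm
  have hindex (i) (hi : i ≤ p.length) : c (p.getVert i) = i :=
    hp.getVert_injOn (hle _) hi (hpath _ (p.getVert_mem_support i))
  refine ⟨c, hle, hpath, fun w w' hadj hlt => ?_⟩
  have hmem : s(w, w') ∈ p.edges := by
    by_contra hmem
    have hww' := Adj.reachable (deleteEdges_adj (s := {e | e ∈ p.edges}).2 ⟨hadj, hmem⟩)
    have heq := eq_of_reachable_deleteEdges hT.isAcyclic p (hπ w) (hπ w')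
      ((hreach w).symm.trans (hww'.trans (hreach w')))
    rw [← hc, ← hc] at heq
    exact hlt.ne (hp.getVert_injOn (hle w) (hle w') heq)
  refine ⟨?_, hpath w (p.fst_mem_support_of_mem_edges hmem),
    hpath w' (p.snd_mem_support_of_mem_edges hmem)⟩
  obtain ⟨i, hi, heq⟩ := (Walk.mk_mem_edges_iff_exists p).1 hmem
  rcases Sym2.eq_iff.1 heq with ⟨rfl, rfl⟩ | ⟨rfl, rfl⟩
  · rw [hindex _ hi.le, hindex _ hi]
  · rw [hindex _ hi.le, hindex _ hi] at hlt
    lia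

/-- `x` is the root of the subtree `X`: every edge that leaves `X` starts at `x`. -/
def IsAttachedAt (T : SimpleGraph W) (X : Set W) (x : W) : Prop :=
  ∀ ⦃w w'⦄, w ∈ X → w' ∉ X → T.Adj w w' → w = x

/-- `d` measures the position of the vertices of `X` along a path `q 1, …, q n` of `X` with vertex
set `Q`: deleting the edges of the path leaves one component around each `q i`, and the vertices
of `X` in that component have level `i`. Vertices outside `X` have level `0`. -/
structure IsLevelling (T : SimpleGraph W) (X Q : Set W) (n : ℕ) (q : ℕ → W) (d : W → ℕ) :
    Prop where
  mem_iff : ∀ w, w ∈ X ↔ 1 ≤ d w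
  le : ∀ w, d w ≤ n
  eq_of_mem : ∀ w ∈ Q, q (d w) = w
  of_adj_of_lt : ∀ ⦃w w'⦄, T.Adj w w' → d w < d w' →
    d w' = d w + 1 ∧ q (d w') = w' ∧ (1 ≤ d w → q (d w) = w)

theorem exists_isLevelling (hT : T.IsTree) {p : T.Walk x z} (hp : p.IsPath)
    (hpX : ∀ w ∈ p.support, w ∈ X) (hX : IsAttachedAt T X x) :
    ∃ n q d, IsLevelling T X {w | w ∈ p.support} n q d := by
  classical
  obtain ⟨c, hle, hpath, hadj_lt⟩ := exists_projection_index hT hp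
  have hx : c x = 0 :=
    hp.getVert_injOn (hle x) p.length.zero_le ((hpath x p.start_mem_support).trans (by simp))
  refine ⟨p.length + 1, fun i => p.getVert (i - 1), fun w => if w ∈ X then c w + 1 else 0,
    fun w => by grind, fun w => by grind, fun w hw => by simp [hpX w hw, hpath w hw],
    fun w w' hadj hlt => ?_⟩
  by_cases hw' : w' ∈ X
  · by_cases hw : w ∈ X
    · grind
    · obtain rfl := hX hw' hw hadj.symm
      simp [hw, hw', hx]
  · simp [hw'] at hlt

theorem IsLevelling.mem_of_connected (hd : IsLevelling T X Q n q d) (hS : (T.induce S).Connected)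
    (ht : t ∈ S) (ht' : t' ∈ S) (hlt : d t < d t') (hi : 1 ≤ i) (hti : d t ≤ i) (hit' : i ≤ d t') :
    q i ∈ S := by
  obtain ⟨p, hp⟩ := exists_walk_subset hS ht ht'
  clear ht ht'
  induction p with
  | nil => lia
  | @cons a b c hab r ih =>
    have ha : a ∈ S := hp a (by simp)
    have hb : b ∈ S := hp b (by simp)
    have hstep := hd.of_adj_of_lt hab
    rcases lt_or_ge i (d b) with hib | hbi
    · grind
    · rcases lt_or_ge (d b) (d c) with hbc | hcb
      · exact ih hbc hbi hit' fun y hy => hp y (by simp [hy])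
      · grind

end Trees

section Components

variable {W : Type} {T : SimpleGraph W} {s S X Q Y Y' : Set W} {x : W}

theorem isCompOf_setOf_walk {a : W} (ha : a ∈ s) :
    IsCompOf T s {w | ∃ p : T.Walk a w, ∀ x ∈ p.support, x ∈ s} := by
  classical
  have hmem : a ∈ {w | ∃ p : T.Walk a w, ∀ x ∈ p.support, x ∈ s} := ⟨Walk.nil, by simpa using ha⟩
  refine ⟨⟨a, hmem⟩, fun w ⟨p, hp⟩ => hp w p.end_mem_support, ?_, ?_⟩
  · refine induce_connected_of_patches a hmem fun ⟨p, hp⟩ => ?_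
    refine ⟨{x | x ∈ p.support}, fun x hx => ⟨p.takeUntil x hx, fun y hy => ?_⟩, by simp, by simp,
      p.connected_induce_support.preconnected _ _⟩
    exact hp y (p.support_takeUntil_subset_support hx hy)
  · rintro u v ⟨p, hp⟩ hv hadj
    refine ⟨p.concat hadj, fun y hy => ?_⟩
    rw [Walk.support_concat, List.mem_append, List.mem_singleton] at hy
    exact hy.elim (hp y) (· ▸ hv)

theorem subset_of_isCompOf (hY : IsCompOf T s Y) (hS : (T.induce S).Connected) (hSs : S ⊆ s)
    (hmeet : (S ∩ Y).Nonempty) : S ⊆ Y := by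
  obtain ⟨a, haS, haY⟩ := hmeet
  intro b hb
  by_contra hbY
  obtain ⟨p, hp⟩ := exists_walk_subset hS haS hb
  obtain ⟨e, he, hfst, hsnd⟩ := p.exists_boundary_dart Y haY hbY
  exact hsnd (hY.2.2.2 hfst (hSs (hp _ (p.dart_snd_mem_support_of_mem_darts he))) e.adj)

theorem eq_of_isCompOf (hY : IsCompOf T s Y) (hY' : IsCompOf T s Y') (hmeet : (Y ∩ Y').Nonempty) :
    Y = Y' :=
  (subset_of_isCompOf hY' hY.2.2.1 hY.2.1 hmeet).antisymm
    (subset_of_isCompOf hY hY'.2.2.1 hY'.2.1 (Set.inter_comm Y Y' ▸ hmeet))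

theorem exists_isCompOf_superset (hS : (T.induce S).Connected) (hSs : S ⊆ s) :
    ∃ Y, IsCompOf T s Y ∧ S ⊆ Y := by
  obtain ⟨⟨a, ha⟩⟩ := hS.nonempty
  have hY := isCompOf_setOf_walk (T := T) (hSs ha)
  exact ⟨_, hY, subset_of_isCompOf hY hS hSs ⟨a, ha, Walk.nil, by simpa using hSs ha⟩⟩

theorem exists_isAttachedAt_of_isCompOf (hT : T.IsTree) (hx : x ∈ Q) (hQ : (T.induce Q).Connected)
    (hX : IsAttachedAt T X x) (hY : IsCompOf T (X \ Q) Y) :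
    ∃ x' ∈ Y, (∃ u ∈ Q, T.Adj u x') ∧ IsAttachedAt T Y x' := by
  obtain ⟨⟨a, ha⟩, hsub, hconn, hclosed⟩ := hY
  have hYQ : Disjoint Y Q := Set.disjoint_left.2 fun _ hy => (hsub hy).2
  have hout ⦃w w'⦄ (hw : w ∈ Y) (hw' : w' ∉ Y) (hadj : T.Adj w w') : w' ∈ Q := by
    by_contra hQ'
    by_cases hX' : w' ∈ X
    · exact hw' (hclosed hw ⟨hX', hQ'⟩ hadj)
    · exact (hsub hw).2 (hX (hsub hw).1 hX' hadj ▸ hx)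
  obtain ⟨p⟩ := hT.connected.preconnected a x
  obtain ⟨e, -, hfst, hsnd⟩ := p.exists_boundary_dart Y ha fun h => (hsub h).2 hx
  have heQ := hout hfst hsnd e.adj
  exact ⟨e.fst, hfst, ⟨e.snd, heQ, e.adj.symm⟩, fun w w' hw hw' hadj =>
    (eq_and_eq_of_adj_of_disjoint hT.isAcyclic hconn hQ hYQ hw hfst (hout hw hw' hadj) heQ hadj
      e.adj).1⟩

end Components

section Cores

variable {V W : Type*} {S : V → Set W} {l : List V} {Z : Set W} {u : V}

/-- The core of a path `l` in a family `S` of subtrees: the points common to the subtrees of two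
consecutive vertices of `l`. -/
def pathCore (S : V → Set W) (l : List V) : Set W :=
  {t | ∃ u w, [u, w] <:+: l ∧ t ∈ S u ∧ t ∈ S w}

theorem exists_mem_of_mem_pathCore {t : W} (ht : t ∈ pathCore S l) : ∃ u ∈ l, t ∈ S u := by
  obtain ⟨u, w, huw, htu, -⟩ := ht
  exact ⟨u, huw.subset (by simp), htu⟩

theorem inter_pathCore_nonempty (hl : l.IsChain fun u w => (S u ∩ S w).Nonempty)
    (hlength : 2 ≤ l.length) (hu : u ∈ l) : (S u ∩ pathCore S l).Nonempty := by
  obtain ⟨w, huw | hwu⟩ : ∃ w, [u, w] <:+: l ∨ [w, u] <:+: l := by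
    obtain ⟨A, B, rfl⟩ := List.append_of_mem hu
    rcases B with _ | ⟨b, B⟩
    · obtain ⟨A, a, rfl⟩ := A.eq_nil_or_concat.resolve_left (by rintro rfl; simp at hlength)
      exact ⟨a, .inr ⟨A, [], by simp⟩⟩
    · exact ⟨b, .inl ⟨A, B, by simp⟩⟩
  · obtain ⟨t, htu, htw⟩ := List.isChain_pair.1 (hl.infix huw)
    exact ⟨t, htu, u, w, huw, htu, htw⟩
  · obtain ⟨t, htw, htu⟩ := List.isChain_pair.1 (hl.infix hwu)
    exact ⟨t, htu, w, u, hwu, htw, htu⟩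

theorem inter_nonempty_of_pathCore_inter_nonempty
    (hl : l.IsChain fun u w => (S u ∩ S w).Nonempty) (hcore : (pathCore S l ∩ Z).Nonempty)
    (hclosed : ∀ u ∈ l, (S u ∩ Z).Nonempty → S u ∩ pathCore S l ⊆ Z) :
    ∀ u ∈ l, (S u ∩ Z).Nonempty := by
  obtain ⟨t, ht, htZ⟩ := hcore
  obtain ⟨u, hu, htu⟩ := exists_mem_of_mem_pathCore ht
  have hchain : l.IsChain fun u w => (S u ∩ Z).Nonempty = (S w ∩ Z).Nonempty := by
    rw [List.isChain_iff_forall_rel_of_append_cons_cons] at hl ⊢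
    intro a b L M heq
    obtain ⟨s, hsa, hsb⟩ := hl heq
    have hs : s ∈ pathCore S l := ⟨a, b, ⟨L, M, by simp [heq]⟩, hsa, hsb⟩
    exact propext ⟨fun ha => ⟨s, hsb, hclosed a (by simp [heq]) ha ⟨hsa, hs⟩⟩,
      fun hb => ⟨s, hsa, hclosed b (by simp [heq]) hb ⟨hsb, hs⟩⟩⟩
  exact fun w hw => (eq_of_isChain_eq hchain u hu w hw).mp ⟨t, htu, htZ⟩

end Cores

section Levels

variable {V W : Type} {G : SimpleGraph V} {T : SimpleGraph W} {R : TreeRep G T} {A A' : Finset V}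
  {X Q s : Set W} {n lo hi a b y α : ℕ} {q : ℕ → W} {d : W → ℕ} {h : V → Set W} {l : List V}
  {v : V}

theorem isChain_inter_nonempty (R : TreeRep G T) (hl : IsPathList G l) :
    l.IsChain fun u w => (R.S u ∩ R.S w).Nonempty :=
  hl.1.imp fun u w hadj => (R.adj_iff u w hadj.ne).1 hadj

/-- Every longest path that avoids `A` has a core point at some level between `lo` and `hi`. -/
def CoresMeetLevels (R : TreeRep G T) (d : W → ℕ) (A : Finset V) (lo hi : ℕ) : Prop :=
  ∀ l ∈ avoiding G A, ∃ t ∈ pathCore R.S l, d t ∈ Set.Icc lo hi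

theorem exists_lowest_level (hne : (avoiding G A).Nonempty) (hcore : CoresMeetLevels R d A lo hi) :
    ∃ y ∈ Set.Icc lo hi, CoresMeetLevels R d A lo y ∧ ∃ l ∈ avoiding G A,
      (∃ t ∈ pathCore R.S l, d t = y) ∧ ∀ t ∈ pathCore R.S l, lo ≤ d t → y ≤ d t := by
  let levels (l : List V) : Set ℕ := d '' pathCore R.S l ∩ Set.Ici lo
  let lowest (l : List V) : ℕ := sInf (levels l)
  have hmem (l) (hl : l ∈ avoiding G A) : lowest l ∈ levels l := by
    obtain ⟨t, ht, htlo, -⟩ := hcore l hl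
    exact Nat.sInf_mem ⟨d t, ⟨t, ht, rfl⟩, htlo⟩
  have hle (l) (hl : l ∈ avoiding G A) : lowest l ≤ hi := by
    obtain ⟨t, ht, htlo, hthi⟩ := hcore l hl
    exact (Nat.sInf_le (s := levels l) ⟨⟨t, ht, rfl⟩, htlo⟩).trans hthi
  have hbdd : BddAbove (lowest '' avoiding G A) := ⟨hi, by rintro _ ⟨l, hl, rfl⟩; exact hle l hl⟩
  obtain ⟨l, hl, hy⟩ := Nat.sSup_mem (hne.image lowest) hbdd
  refine ⟨lowest l, ⟨(hmem l hl).2, hle l hl⟩, fun l' hl' => ?_, l, hl, (hmem l hl).1,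
    fun t ht htlo => Nat.sInf_le ⟨⟨t, ht, rfl⟩, htlo⟩⟩
  obtain ⟨⟨t, ht, heq⟩, hlo⟩ := hmem l' hl'
  exact ⟨t, ht, heq ▸ hlo, heq ▸ hy ▸ le_csSup hbdd ⟨l', hl', rfl⟩⟩

theorem IsLevelling.level_eq_of_notMem (hd : IsLevelling T X Q n q d) {S : Set W}
    (hS : (T.induce S).Connected) {t t' : W} (ht : t ∈ S) (ht' : t' ∈ S) (hpos : 1 ≤ d t)
    (hq : q (d t) ∉ S) : d t' = d t := by
  by_contra hne
  rcases lt_or_gt_of_ne hne with hlt | hgt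
  · exact hq (hd.mem_of_connected hS ht' ht hlt hpos hlt.le le_rfl)
  · exact hq (hd.mem_of_connected hS ht ht' hgt hpos le_rfl hgt.le)

theorem IsLevelling.subset_diff_of_notMem (hd : IsLevelling T X Q n q d) {S : Set W}
    (hS : (T.induce S).Connected) {t : W} (ht : t ∈ S) (hpos : 1 ≤ d t) (hq : q (d t) ∉ S) :
    S ⊆ X \ Q := fun t' ht' => by
  have heq := hd.level_eq_of_notMem hS ht ht' hpos hq
  exact ⟨(hd.mem_iff t').2 (heq ▸ hpos), fun hQ => hq (heq ▸ (hd.eq_of_mem t' hQ).symm ▸ ht')⟩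

theorem IsLevelling.subtree_subset_diff (hd : IsLevelling T X Q n q d) (hl : IsPathList G l)
    (hy : 1 ≤ y) (hcore : ∃ t ∈ pathCore R.S l, d t = y) (hq : ∀ u ∈ l, q y ∉ R.S u) :
    ∀ u ∈ l, R.S u ⊆ X \ Q := by
  have hmeet := inter_nonempty_of_pathCore_inter_nonempty (Z := {t | d t = y})
    (isChain_inter_nonempty R hl) hcore fun u hu ⟨t, htu, hty⟩ t' ht' => by
      subst hty
      exact hd.level_eq_of_notMem (R.subtree_connected u) htu ht'.1 hy (hq u hu)
  intro u hu
  obtain ⟨t, htu, hty⟩ := hmeet u hu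
  subst hty
  exact hd.subset_diff_of_notMem (R.subtree_connected u) htu hy (hq u hu)

theorem IsLevelling.exists_level_ge (hd : IsLevelling T X Q n q d) (hl : IsPathList G l)
    (hlo : 1 ≤ lo) (hcore : ∃ t ∈ pathCore R.S l, d t = y)
    (hlowest : ∀ t ∈ pathCore R.S l, lo ≤ d t → y ≤ d t)
    (hq : ∀ u ∈ l, ∃ j ∈ Set.Icc lo y, q j ∉ R.S u) : ∀ u ∈ l, ∃ t ∈ R.S u, y ≤ d t := by
  obtain ⟨t₀, ht₀, hty⟩ := hcore
  refine inter_nonempty_of_pathCore_inter_nonempty (Z := {t | y ≤ d t})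
    (isChain_inter_nonempty R hl) ⟨t₀, ht₀, hty.ge⟩ fun u hu ⟨s, hsu, hs⟩ t ⟨htu, ht⟩ => ?_
  by_contra hlt
  replace hlt : d t < y := not_le.1 hlt
  have htlo : d t < lo := by
    by_contra! hge
    exact hlt.not_ge (hlowest t ht hge)
  obtain ⟨j, ⟨hloj, hjy⟩, hj⟩ := hq u hu
  exact hj (hd.mem_of_connected (R.subtree_connected u) htu hsu (hlt.trans_le hs)
    (hlo.trans hloj) (htlo.le.trans hloj) (hjy.trans hs))

theorem IsLevelling.exists_level_le (hd : IsLevelling T X Q n q d) (hl : IsPathList G l)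
    (hα : 1 ≤ α) (hcore : ∃ t ∈ pathCore R.S l, d t ≤ α)
    (hgap : ∀ t ∈ pathCore R.S l, d t ∉ Set.Icc (α + 1) y)
    (hq : ∀ u ∈ l, ∃ j ∈ Set.Icc α y, q j ∉ R.S u) : ∀ u ∈ l, ∃ t ∈ R.S u, d t ≤ α := by
  refine inter_nonempty_of_pathCore_inter_nonempty (Z := {t | d t ≤ α})
    (isChain_inter_nonempty R hl) hcore fun u hu ⟨s, hsu, (hs : d s ≤ α)⟩ t ⟨htu, ht⟩ => ?_
  by_contra hlt
  replace hlt : α < d t := not_le.1 hlt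
  have hyt : y < d t := by
    by_contra! hle
    exact hgap t ht ⟨hlt, hle⟩
  obtain ⟨j, ⟨hαj, hjy⟩, hj⟩ := hq u hu
  exact hj (hd.mem_of_connected (R.subtree_connected u) hsu htu (hs.trans_lt hlt)
    (hα.trans hαj) (hs.trans hαj) (hjy.trans hyt.le))

-- A longest path whose core misses the levels in `[α + 1, y]` would live below level `α + 1`, while
-- `l` lives above level `y`; a common vertex of the two spans `[α, y]`.
theorem IsLevelling.coresMeetLevels_succ (hd : IsLevelling T X Q n q d) (hconn : G.Connected)
    (hlo : 1 ≤ lo) (hloα : lo ≤ α) (hαy : α < y) (hcores : CoresMeetLevels R d A lo y)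
    (hl : l ∈ avoiding G A) (hcore : ∃ t ∈ pathCore R.S l, d t = y)
    (hlowest : ∀ t ∈ pathCore R.S l, lo ≤ d t → y ≤ d t)
    (hq : ∀ u ∉ A, ∃ j ∈ Set.Icc α y, q j ∉ R.S u) : CoresMeetLevels R d A (α + 1) y := by
  intro l' hl'
  by_contra! hgap
  have hqmem {l''} (hl'' : l'' ∈ avoiding G A) (u) (hu : u ∈ l'') :
      ∃ j ∈ Set.Icc α y, q j ∉ R.S u := hq u fun huA => hl''.2 u huA hu
  have hhigh := hd.exists_level_ge hl.1.isPathList hlo hcore hlowest fun u hu =>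
    (hqmem hl u hu).imp fun j hj => ⟨⟨hloα.trans hj.1.1, hj.1.2⟩, hj.2⟩
  have hcore' : ∃ t ∈ pathCore R.S l', d t ≤ α := by
    obtain ⟨t, ht, -, hty⟩ := hcores l' hl'
    exact ⟨t, ht, by_contra fun hlt => hgap t ht ⟨not_le.1 hlt, hty⟩⟩
  have hlow := hd.exists_level_le hl'.1.isPathList (hlo.trans hloα) hcore' hgap (hqmem hl')
  obtain ⟨u, hul, hul'⟩ := hl.1.exists_mem_inter hconn hl'.1
  obtain ⟨t, htu, ht⟩ := hhigh u hul
  obtain ⟨s, hsu, hs⟩ := hlow u hul'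
  obtain ⟨j, ⟨hαj, hjy⟩, hj⟩ := hqmem hl u hul
  exact hj (hd.mem_of_connected (R.subtree_connected u) hsu htu (by lia) (by lia) (by lia)
    (by lia))

theorem IsLevelling.exists_subset_diff_or_exists_span (hd : IsLevelling T X Q n q d)
    (hconn : G.Connected) (hlo : 1 ≤ lo) (hne : (avoiding G A).Nonempty)
    (hcores : CoresMeetLevels R d A lo hi) :
    (∃ l, IsLongestPathList G l ∧ ∀ u ∈ l, R.S u ⊆ X \ Q) ∨
      ∃ a b, lo ≤ a ∧ b ≤ hi ∧ (∃ v ∉ A, ∀ j ∈ Set.Icc a b, q j ∈ R.S v) ∧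
        CoresMeetLevels R d A a b := by
  classical
  obtain ⟨y, ⟨hloy, hyhi⟩, hcoresy, l, hl, hcore, hlowest⟩ := exists_lowest_level hne hcores
  by_cases hv : ∃ v ∉ A, q y ∈ R.S v
  · have hspan : ∃ a, lo ≤ a ∧ a ≤ y ∧ ∃ v ∉ A, ∀ j ∈ Set.Icc a y, q j ∈ R.S v := by
      obtain ⟨v, hvA, hvy⟩ := hv
      exact ⟨y, hloy, le_rfl, v, hvA, by simpa using hvy⟩
    obtain ⟨hloa, hay, hva⟩ := Nat.find_spec hspan
    refine .inr ⟨Nat.find hspan, y, hloa, hyhi, hva, ?_⟩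
    rcases hloa.eq_or_lt with heq | hlt
    · exact heq ▸ hcoresy
    · obtain ⟨α, hα⟩ := Nat.exists_eq_add_of_lt hlt
      have hαmin := Nat.find_min hspan (m := lo + α) (by lia)
      rw [hα]
      refine hd.coresMeetLevels_succ hconn hlo le_self_add (by lia) hcoresy hl hcore hlowest
        fun u hu => ?_
      by_contra! hj
      exact hαmin ⟨le_self_add, by lia, u, hu, hj⟩
  · push Not at hv
    exact .inl ⟨l, hl.1, hd.subtree_subset_diff hl.1.isPathList (hlo.trans hloy) hcore
      fun u hu => hv u fun huA => hl.2 u huA hu⟩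

theorem exists_isCompOf_of_subset [Nontrivial V] (hconn : G.Connected)
    (hl : IsLongestPathList G l) (hs : ∀ u ∈ l, R.S u ⊆ s) :
    ∃ Y, IsCompOf T s Y ∧ ∀ l', IsLongestPathList G l' → (pathCore R.S l' ∩ Y).Nonempty := by
  obtain ⟨u₀, hu₀⟩ := List.exists_mem_of_ne_nil l hl.ne_nil
  obtain ⟨Y, hY, hu₀Y⟩ := exists_isCompOf_superset (R.subtree_connected u₀) (hs u₀ hu₀)
  have hchain := isChain_inter_nonempty R hl.isPathList
  have hsubset (u) (hu : u ∈ l) (hmeet : (R.S u ∩ Y).Nonempty) : R.S u ⊆ Y :=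
    subset_of_isCompOf hY (R.subtree_connected u) (hs u hu) hmeet
  obtain ⟨t, htu₀, ht⟩ := inter_pathCore_nonempty hchain (hl.two_le_length hconn) hu₀
  have hmeet := inter_nonempty_of_pathCore_inter_nonempty hchain ⟨t, ht, hu₀Y htu₀⟩
    fun u hu hmeet => Set.inter_subset_left.trans (hsubset u hu hmeet)
  refine ⟨Y, hY, fun l' hl' => ?_⟩
  obtain ⟨u, hul, hul'⟩ := hl.exists_mem_inter hconn hl'
  obtain ⟨s, hsu, hs⟩ := inter_pathCore_nonempty (isChain_inter_nonempty R hl'.isPathList)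
    (hl'.two_le_length hconn) hul'
  exact ⟨s, hs, hsubset u hul (hmeet u hul) hsu⟩

/-- The vertices of `G` whose subtree contains one of the path vertices `q a, …, q b`. -/
def axisSet (R : TreeRep G T) (q : ℕ → W) (a b : ℕ) : Set V :=
  {u | ∃ i ∈ Set.Icc a b, q i ∈ R.S u}

/-- The vertices of `G` whose subtree reaches a level between `a` and `b` but contains none of the
path vertices `q a, …, q b`. -/
def branchSet (R : TreeRep G T) (q : ℕ → W) (d : W → ℕ) (a b : ℕ) : Set V :=
  {u | u ∉ axisSet R q a b ∧ ∃ t ∈ R.S u, d t ∈ Set.Icc a b}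

theorem isHub_axisSet {a' b' : ℕ} (hv : ∀ j ∈ Set.Icc a b, q j ∈ R.S v) (ha : a ≤ a')
    (hb : b' ≤ b) : IsHub G (axisSet R q a' b') v := by
  rintro k ⟨i, ⟨hai, hib⟩, hik⟩ hkv
  exact (R.adj_iff k v hkv).2 ⟨q i, hik, hv i ⟨ha.trans hai, hib.trans hb⟩⟩

theorem IsLevelling.subset_diff_of_mem_branchSet (hd : IsLevelling T X Q n q d) (ha : 1 ≤ a)
    {u : V} (hu : u ∈ branchSet R q d a b) : R.S u ⊆ X \ Q := by
  obtain ⟨huK, t, htu, ht⟩ := hu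
  exact hd.subset_diff_of_notMem (R.subtree_connected u) htu (ha.trans ht.1)
    fun hq => huK ⟨d t, ht, hq⟩

theorem IsLevelling.level_mem_of_mem_branchSet (hd : IsLevelling T X Q n q d) (ha : 1 ≤ a)
    {u : V} (hu : u ∈ branchSet R q d a b) {t' : W} (ht' : t' ∈ R.S u) : d t' ∈ Set.Icc a b := by
  obtain ⟨huK, t, htu, ht⟩ := hu
  rwa [hd.level_eq_of_notMem (R.subtree_connected u) htu ht' (ha.trans ht.1)
    fun hq => huK ⟨d t, ht, hq⟩]

theorem IsLevelling.isLabelledSeparation (hd : IsLevelling T X Q n q d) (ha : 1 ≤ a)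
    (hcomp : ∀ u ∈ branchSet R q d a b, IsCompOf T (X \ Q) (h u))
    (hsub : ∀ u ∈ branchSet R q d a b, R.S u ⊆ h u) :
    IsLabelledSeparation G (axisSet R q a b) (branchSet R q d a b) h where
  notMem u hu := hu.1
  mem_of_adj u w hu hw hadj := by
    obtain ⟨t, htu, htw⟩ := (R.adj_iff u w hadj.ne).1 hadj
    by_contra hwK
    exact hw ⟨hwK, t, htw, hd.level_mem_of_mem_branchSet ha hu htu⟩
  label_eq u w hu hw hadj := by
    obtain ⟨t, htu, htw⟩ := (R.adj_iff u w hadj.ne).1 hadj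
    exact eq_of_isCompOf (hcomp u hu) (hcomp w hw) ⟨t, hsub u hu htu, hsub w hw htw⟩

-- Otherwise a hub outside `l` could be inserted into `l` at the core point.
theorem exists_mem_branchSet (hl : IsLongestPathList G l) (hv : IsHub G (axisSet R q a b) v)
    (hvl : v ∉ l) (hcore : ∃ t ∈ pathCore R.S l, d t ∈ Set.Icc a b) :
    ∃ u ∈ l, u ∈ branchSet R q d a b := by
  obtain ⟨t, ⟨u, w, huw, htu, htw⟩, ht⟩ := hcore
  rcases hl.notMem_or_notMem_of_isHub hv hvl huw with hu | hw
  · exact ⟨u, huw.subset (by simp), hu, t, htu, ht⟩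
  · exact ⟨w, huw.subset (by simp), hw, t, htw, ht⟩

/-- The outcome of a round of the game in which the subforest `s` remains: `k` vertices can be added
to `A` so that either no longest path is left, or the cores of all those left meet one
component of `s`. -/
def ConfinedToComponent (R : TreeRep G T) (A : Finset V) (s : Set W) (k : ℕ) : Prop :=
  ∃ A' : Finset V, A'.card ≤ A.card + k ∧ (avoiding G A' = ∅ ∨
    ∃ Y, IsCompOf T s Y ∧ ∀ l ∈ avoiding G A', (pathCore R.S l ∩ Y).Nonempty)

theorem confinedToComponent_of_subset [Nontrivial V] (hconn : G.Connected)
    (hl : IsLongestPathList G l) (hs : ∀ u ∈ l, R.S u ⊆ s) : ConfinedToComponent R A s 0 := by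
  obtain ⟨Y, hY, hmeet⟩ := exists_isCompOf_of_subset hconn hl hs
  exact ⟨A, le_rfl, .inr ⟨Y, hY, fun l' hl' => hmeet l' hl'.1⟩⟩

theorem confinedToComponent_of_avoiding_eq_empty (h : avoiding G A = ∅) :
    ConfinedToComponent R A s 0 :=
  ⟨A, le_rfl, .inl h⟩

theorem ConfinedToComponent.mono {k k' : ℕ} (h : ConfinedToComponent R A' s k')
    (hcard : A'.card + k' ≤ A.card + k) : ConfinedToComponent R A s k := by
  obtain ⟨B, hB, hBA⟩ := h
  exact ⟨B, hB.trans hcard, hBA⟩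

theorem IsLevelling.confinedToComponent_of_two_hubs [Nontrivial V] {v₁ v₂ : V}
    (hd : IsLevelling T X Q n q d) (hconn : G.Connected) (ha : 1 ≤ a)
    (hv₁ : IsHub G (axisSet R q a b) v₁) (hv₂ : IsHub G (axisSet R q a b) v₂) (hv₁A : v₁ ∈ A)
    (hv₂A : v₂ ∈ A) (hne : v₁ ≠ v₂) (hnonempty : (avoiding G A).Nonempty)
    (hcores : CoresMeetLevels R d A a b) : ConfinedToComponent R A (X \ Q) 6 := by
  classical
  choose! h hcomp hsub using fun u (hu : u ∈ branchSet R q d a b) =>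
    exists_isCompOf_superset (R.subtree_connected u) (hd.subset_diff_of_mem_branchSet ha hu)
  obtain ⟨B, hB, u₀, hu₀, htrans⟩ := (hd.isLabelledSeparation ha hcomp hsub).exists_isTransversal
    hconn hv₁ hv₂ hv₁A hv₂A hne hnonempty
    fun l hl => exists_mem_branchSet hl.1 hv₁ (hl.2 v₁ hv₁A) (hcores l hl)
  refine ⟨A ∪ B, (Finset.card_union_le A B).trans (by lia), .inr ⟨h u₀, hcomp u₀ hu₀, ?_⟩⟩
  intro l hl
  obtain ⟨u, hul, hu, hlabel⟩ : ∃ u ∈ l, u ∈ branchSet R q d a b ∧ h u = h u₀ := by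
    by_contra! hlabel
    obtain ⟨w, hwB, hwl⟩ :=
      htrans l ⟨avoiding_subset_avoiding Finset.subset_union_left hl, hlabel⟩
    exact hl.2 w (Finset.mem_union_right A hwB) hwl
  obtain ⟨t, htu, ht⟩ := inter_pathCore_nonempty (isChain_inter_nonempty R hl.1.isPathList)
    (hl.1.two_le_length hconn) hul
  exact ⟨t, ht, hlabel ▸ hsub u hu htu⟩

theorem IsLevelling.confinedToComponent [Nontrivial V] (hd : IsLevelling T X Q n q d)
    (hconn : G.Connected) (hcore : ∀ l ∈ avoiding G A, (pathCore R.S l ∩ X).Nonempty) :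
    ConfinedToComponent R A (X \ Q) 8 := by
  classical
  have hcores₀ : CoresMeetLevels R d A 1 n := fun l hl => by
    obtain ⟨t, ht, htX⟩ := hcore l hl
    exact ⟨t, ht, (hd.mem_iff t).1 htX, hd.le t⟩
  rcases (avoiding G A).eq_empty_or_nonempty with hempty | hne₀
  · exact (confinedToComponent_of_avoiding_eq_empty hempty).mono (by lia)
  obtain ⟨l, hl, hlX⟩ | ⟨a₁, b₁, ha₁, -, ⟨v₁, -, hv₁⟩, hcores₁⟩ :=
    hd.exists_subset_diff_or_exists_span hconn le_rfl hne₀ hcores₀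
  · exact (confinedToComponent_of_subset (A := A) hconn hl hlX).mono (by lia)
  have hcard₁ := Finset.card_insert_le v₁ A
  rcases (avoiding G (insert v₁ A)).eq_empty_or_nonempty with hempty | hne₁
  · exact (confinedToComponent_of_avoiding_eq_empty hempty).mono (by lia)
  obtain ⟨l, hl, hlX⟩ | ⟨a₂, b₂, ha₂, hb₂, ⟨v₂, hv₂A, hv₂⟩, hcores₂⟩ :=
    hd.exists_subset_diff_or_exists_span hconn ha₁ hne₁ fun l hl =>
      hcores₁ l (avoiding_subset_avoiding (Finset.subset_insert v₁ A) hl)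
  · exact (confinedToComponent_of_subset (A := A) hconn hl hlX).mono (by lia)
  have hcard₂ := Finset.card_insert_le v₂ (insert v₁ A)
  rcases (avoiding G (insert v₂ (insert v₁ A))).eq_empty_or_nonempty with hempty | hne₂
  · exact (confinedToComponent_of_avoiding_eq_empty hempty).mono (by lia)
  refine (hd.confinedToComponent_of_two_hubs hconn (ha₁.trans ha₂) (isHub_axisSet hv₁ ha₂ hb₂)
    (isHub_axisSet hv₂ le_rfl le_rfl) (by simp) (by simp) (by grind) hne₂ fun l hl => ?_).mono
    (by lia)
  exact hcores₂ l (avoiding_subset_avoiding (Finset.subset_insert v₂ _) hl)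

end Levels

section Game

variable {V W : Type} {G : SimpleGraph V} {T : SimpleGraph W}

theorem exists_avoiding_eq_empty_of_cutterWins [Nontrivial V] (hconn : G.Connected)
    (R : TreeRep G T) {t : ℕ} {X : Set W} {x : W} {A : Finset V} (hwin : cutterWins T t X x)
    (hX : IsAttachedAt T X x) (hcore : ∀ l ∈ avoiding G A, (pathCore R.S l ∩ X).Nonempty) :
    ∃ A' : Finset V, A'.card ≤ A.card + 8 * t ∧ avoiding G A' = ∅ := by
  induction t generalizing X x A with
  | zero => exact hwin.elim
  | succ t ih =>
    obtain ⟨z, -, p, hp, hpX, hend⟩ := hwin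
    obtain ⟨n, q, d, hd⟩ := exists_isLevelling R.isTree hp hpX hX
    obtain ⟨A', hA', hempty | ⟨Y, hY, hmeet⟩⟩ := hd.confinedToComponent hconn hcore
    · exact ⟨A', by lia, hempty⟩
    obtain ⟨x', hx', hadj, hY'⟩ :=
      exists_isAttachedAt_of_isCompOf R.isTree p.start_mem_support p.connected_induce_support hX hY
    have hwin' : cutterWins T t Y x' := by
      rcases hend with hXp | hend
      · obtain ⟨y, hy⟩ := hY.1
        exact absurd (hXp ▸ (hY.2.1 hy).1) (hY.2.1 hy).2
      · exact hend Y x' hY hx' hadj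
    obtain ⟨A'', hA'', hempty⟩ := ih hwin' hY' hmeet
    exact ⟨A'', by lia, hempty⟩

theorem cutterWins_of_ncard_le [Finite W] {t : ℕ} {X : Set W} {x : W} (hx : x ∈ X)
    (hcard : X.ncard ≤ t) : cutterWins T t X x := by
  induction t generalizing X x with
  | zero => exact absurd hcard ((Set.ncard_pos).2 ⟨x, hx⟩).not_ge
  | succ t ih =>
    refine ⟨x, hx, Walk.nil, by simp, by simpa using hx, .inr fun X' x' hX' hx' _ => ih hx' ?_⟩
    have hssub : X' ⊂ X :=
      ⟨fun y hy => (hX'.2.1 hy).1, fun hsub => (hX'.2.1 (hsub hx)).2 (by simp)⟩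
    have hlt := Set.ncard_lt_ncard hssub
    lia

theorem exists_cutterWins_ccg [Finite W] [Nonempty W] (T : SimpleGraph W) :
    ∃ r, cutterWins T (ccg T) Set.univ r := by
  obtain ⟨r, hr⟩ : ccg T ∈ Set.range fun r => ccgOn T Set.univ r :=
    Nat.sInf_mem (Set.range_nonempty _)
  have hwin : cutterWins T (Set.univ : Set W).ncard Set.univ r :=
    cutterWins_of_ncard_le (Set.mem_univ r) le_rfl
  have hccgOn : cutterWins T (ccgOn T Set.univ r) Set.univ r :=
    Nat.sInf_mem (s := {t | cutterWins T t Set.univ r}) ⟨_, hwin⟩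
  exact ⟨r, hr ▸ hccgOn⟩

theorem ccg_pos [Finite W] [Nonempty W] (T : SimpleGraph W) : 0 < ccg T := by
  obtain ⟨r, hr⟩ := exists_cutterWins_ccg T
  by_contra hzero
  rw [Nat.eq_zero_of_not_pos hzero] at hr
  exact hr

theorem IsLongestPath.isLongestPathList_support {a b : V} {p : G.Walk a b}
    (hp : IsLongestPath G p) : IsLongestPathList G p.support := by
  refine ⟨isPathList_support hp.1, fun l hl => ?_⟩
  rcases eq_or_ne l [] with rfl | hne
  · simp
  have hsupport := Walk.support_ofSupport hne hl.1
  have hle := hp.2 _ _ (Walk.ofSupport l hne hl.1)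
    ((Walk.isPath_def _).2 (hsupport.symm ▸ hl.2))
  have hlength := congrArg List.length hsupport
  rw [Walk.length_support] at hlength ⊢
  lia

theorem lpt_le_card {A : Finset V} (hA : avoiding G A = ∅) : lpt G ≤ A.card := by
  refine Nat.sInf_le ⟨A, A.finite_toSet, Set.ncard_coe_finset A, fun a b p hp => ?_⟩
  by_contra! hmiss
  exact hA.subset ⟨hp.isLongestPathList_support, hmiss⟩

theorem lpt_le_one [Subsingleton V] [Nonempty V] : lpt G ≤ 1 := by
  obtain ⟨v⟩ := ‹Nonempty V›
  refine lpt_le_card (A := {v}) (Set.eq_empty_of_forall_notMem fun l hl => ?_)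
  obtain ⟨u, hu⟩ := List.exists_mem_of_ne_nil l hl.1.ne_nil
  exact hl.2 v (by simp) (Subsingleton.elim u v ▸ hu)

theorem lpt_le_ccg_general [Finite W] (hconn : G.Connected) (R : TreeRep G T) :
    lpt G ≤ 8 * ccg T := by
  have : Nonempty V := hconn.nonempty
  have : Nonempty W := R.isTree.connected.nonempty
  rcases subsingleton_or_nontrivial V with hV | hV
  · exact lpt_le_one.trans (by have := ccg_pos T; lia)
  · obtain ⟨r, hr⟩ := exists_cutterWins_ccg T
    have hcore (l) (hl : l ∈ avoiding G ∅) : (pathCore R.S l ∩ Set.univ).Nonempty := by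
      obtain ⟨u, hu⟩ := List.exists_mem_of_ne_nil l hl.1.ne_nil
      obtain ⟨t, -, ht⟩ := inter_pathCore_nonempty (isChain_inter_nonempty R hl.1.isPathList)
        (hl.1.two_le_length hconn) hu
      exact ⟨t, ht, trivial⟩
    obtain ⟨A, hA, hempty⟩ := exists_avoiding_eq_empty_of_cutterWins hconn R hr
      (fun _ _ _ hw' => absurd trivial hw') hcore
    exact (lpt_le_card hempty).trans (by simpa using hA)

end Game

/-- If `G` is a connected chordal graph with minimal tree representation
`T`, then `lpt(G) ≤ (4 · ccg(T) + 5) · ccg(T)`. -/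
theorem lpt_le_ccg {V W : Type} [Fintype V] [Fintype W] (G : SimpleGraph V)
    (T : SimpleGraph W) (hconn : G.Connected) (hchordal : IsChordal G)
    (R : TreeRep G T) (hmin : R.IsMinimal) :
    lpt G ≤ (4 * ccg T + 5) * ccg T := by
  have : Nonempty W := R.isTree.connected.nonempty
  nlinarith [lpt_le_ccg_general hconn R, ccg_pos T]
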